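/- (Corollary: range of fairness-modularity.) For any community partition 𝒞 of V, the fairness-modularity satisfies 0 ≤ Q^P ≤ 1 − 1/(2 m^P). -/

import Mathlib

/-!
Consider the weighted graph on `V` whose adjacency matrix counts, for each pair of vertices
(possibly equal), the protected groups containing both. Then `2 * m^P` is the total degree, and
`Q^P` is the Newman modularity of the communities.

Write `e u` for the sum of the matrix entries inside community `u` and `d u` for the sum of the
degrees of its vertices. Then `Q^P ≥ 0` is the Cauchy–Schwarz inequality
`d u ^ 2 ≤ e u * (2 * m^P)` summed over `u`. The upper bound compares both `∑ u, e u` and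
`∑ u, d u ^ 2` with `∑ u, d u = 2 * m^P`: on the one hand `e u ≤ d u`, and on the other
`d u ≤ d u ^ 2`, because `d u` is a natural number.
-/

open Finset

lemma sum_card_inter_of_subset_biUnion {V ι : Type*} [DecidableEq V] {s : Finset ι}
    {C : ι → Finset V} {A : Finset V} (hC : (s : Set ι).PairwiseDisjoint C)
    (hA : A ⊆ s.biUnion C) :
    ∑ u ∈ s, #(C u ∩ A) = #A := by
  rw [← card_biUnion (hC.mono fun _ => inter_subset_left), ← biUnion_inter,
    inter_eq_right.mpr hA]

section FairnessModularity

open scoped Function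

variable {V ι κ : Type*} [Fintype ι] [Fintype κ]

/-- The paper's `m^P`, for a family of groups that may overlap. -/
noncomputable def groupMass (P : κ → Finset V) : ℝ :=
  (1 / 2) * ∑ w, (#(P w) : ℝ) ^ 2

lemma two_mul_groupMass (P : κ → Finset V) : 2 * groupMass P = ∑ w, (#(P w) : ℝ) ^ 2 := by
  rw [groupMass]
  ring

lemma groupMass_nonneg (P : κ → Finset V) : 0 ≤ groupMass P := by
  unfold groupMass
  positivity

lemma groupMass_pos {P : κ → Finset V} (hP : ∃ w, (P w).Nonempty) : 0 < groupMass P := by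
  obtain ⟨w, hw⟩ := hP
  have hcard : (0 : ℝ) < #(P w) := by exact_mod_cast hw.card_pos
  exact mul_pos one_half_pos <|
    sum_pos' (fun _ _ => sq_nonneg _) ⟨w, mem_univ w, pow_pos hcard 2⟩

variable [DecidableEq V]

/-- The number of ordered pairs of vertices of `A` lying in a common group, counted once for each
such group. -/
def internalWeight (P : κ → Finset V) (A : Finset V) : ℝ :=
  ∑ w, (#(A ∩ P w) : ℝ) ^ 2

/-- The sum of the degrees of the vertices of `A`, where the degree of a vertex is the total size
of the groups containing it. -/
def communityVolume (P : κ → Finset V) (A : Finset V) : ℝ :=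
  ∑ w, (#(A ∩ P w) : ℝ) * (#(P w) : ℝ)

/-- The paper's `Q^P`, for arbitrary families of communities and groups. It is `0` when all groups
are empty, as then `1 / (2 * groupMass P) = 0`. -/
noncomputable def fairnessModularity (C : ι → Finset V) (P : κ → Finset V) : ℝ :=
  (1 / (2 * groupMass P)) * ((∑ u, internalWeight P (C u))
    - (1 / (2 * groupMass P)) * ∑ u, communityVolume P (C u) ^ 2)

lemma internalWeight_nonneg (P : κ → Finset V) (A : Finset V) : 0 ≤ internalWeight P A :=
  sum_nonneg fun _ _ => sq_nonneg _

lemma internalWeight_le_communityVolume (P : κ → Finset V) (A : Finset V) :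
    internalWeight P A ≤ communityVolume P A := by
  refine sum_le_sum fun w _ => ?_
  rw [sq]
  gcongr
  exact inter_subset_right

lemma communityVolume_sq_le (P : κ → Finset V) (A : Finset V) :
    communityVolume P A ^ 2 ≤ internalWeight P A * (2 * groupMass P) := by
  rw [two_mul_groupMass]
  exact sum_mul_sq_le_sq_mul_sq _ _ _

lemma communityVolume_le_sq (P : κ → Finset V) (A : Finset V) :
    communityVolume P A ≤ communityVolume P A ^ 2 := by
  unfold communityVolume
  exact_mod_cast Nat.le_self_pow two_ne_zero (∑ w, #(A ∩ P w) * #(P w))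

lemma sum_communityVolume {C : ι → Finset V} {P : κ → Finset V}
    (hC : Pairwise (Disjoint on C)) (hP : ∀ w, P w ⊆ univ.biUnion C) :
    ∑ u, communityVolume P (C u) = 2 * groupMass P := by
  simp only [communityVolume, two_mul_groupMass]
  rw [sum_comm]
  refine sum_congr rfl fun w _ => ?_
  rw [← sum_mul, ← Nat.cast_sum, sum_card_inter_of_subset_biUnion (hC.set_pairwise _) (hP w),
    sq]

theorem fairnessModularity_nonneg (C : ι → Finset V) (P : κ → Finset V) :
    0 ≤ fairnessModularity C P := by
  have hm : 0 ≤ 2 * groupMass P := mul_nonneg zero_le_two (groupMass_nonneg P)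
  refine mul_nonneg (one_div_nonneg.mpr hm) (sub_nonneg.mpr ?_)
  rw [one_div_mul_eq_div]
  refine div_le_of_le_mul₀ hm (sum_nonneg fun u _ => internalWeight_nonneg P (C u)) ?_
  rw [sum_mul]
  exact sum_le_sum fun u _ => communityVolume_sq_le P (C u)

theorem fairnessModularity_le {C : ι → Finset V} {P : κ → Finset V}
    (hC : Pairwise (Disjoint on C)) (hP : ∀ w, P w ⊆ univ.biUnion C)
    (hne : ∃ w, (P w).Nonempty) :
    fairnessModularity C P ≤ 1 - 1 / (2 * groupMass P) := by
  have hm : 0 < 2 * groupMass P := mul_pos two_pos (groupMass_pos hne)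
  have hweight : ∑ u, internalWeight P (C u) ≤ 2 * groupMass P :=
    sum_communityVolume hC hP ▸ sum_le_sum fun u _ => internalWeight_le_communityVolume P (C u)
  have hvolume : 2 * groupMass P ≤ ∑ u, communityVolume P (C u) ^ 2 :=
    sum_communityVolume hC hP ▸ sum_le_sum fun u _ => communityVolume_le_sq P (C u)
  calc fairnessModularity C P
      ≤ 1 / (2 * groupMass P) * (2 * groupMass P - 1 / (2 * groupMass P) * (2 * groupMass P)) := by
        unfold fairnessModularity
        gcongr
    _ = 1 - 1 / (2 * groupMass P) := by
        rw [one_div_mul_cancel hm.ne', mul_sub, one_div_mul_cancel hm.ne', mul_one]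

theorem fairness_modularity_range_general {C : ι → Finset V} {P : κ → Finset V}
    (hC : Pairwise (Disjoint on C)) (hP : ∀ w, P w ⊆ univ.biUnion C)
    (hne : ∃ w, (P w).Nonempty) :
    0 ≤ fairnessModularity C P ∧ fairnessModularity C P ≤ 1 - 1 / (2 * groupMass P) :=
  ⟨fairnessModularity_nonneg C P, fairnessModularity_le hC hP hne⟩

end FairnessModularity

/-- (Corollary: range of fairness-modularity.) 0 ≤ Q^P ≤ 1 − 1/(2 m^P). -/
theorem fairness_modularity_range
    {V : Type*} [Fintype V] [DecidableEq V]
    (n : ℕ) (hn : Fintype.card V = n) (hn1 : 1 ≤ n)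
    (k r : ℕ) (C : Fin k → Finset V) (P : Fin r → Finset V)
    (hCne : ∀ u, (C u).Nonempty)
    (hCdisj : ∀ u u', u ≠ u' → Disjoint (C u) (C u'))
    (hCunion : ∀ v : V, ∃ u, v ∈ C u)
    (hPne : ∀ w, (P w).Nonempty)
    (hPdisj : ∀ w w', w ≠ w' → Disjoint (P w) (P w'))
    (hPunion : ∀ v : V, ∃ w, v ∈ P w)
    (mP : ℝ) (hmP : mP = (1/2) * ∑ w, ((P w).card : ℝ)^2)
    (QP : ℝ)
    (hQP : QP = (1/(2*mP)) *
      ((∑ u, ∑ w, ((C u ∩ P w).card : ℝ)^2)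
        - (1/(2*mP)) * ∑ u, (∑ w, ((C u ∩ P w).card : ℝ) * ((P w).card : ℝ))^2))
    :
    0 ≤ QP ∧ QP ≤ 1 - 1/(2*mP) := by
  subst hmP hQP
  obtain ⟨v⟩ : Nonempty V := Fintype.card_pos_iff.mp (hn ▸ hn1)
  exact fairness_modularity_range_general hCdisj
    (fun _ v _ => by simpa using hCunion v) ((hPunion v).imp fun _ hv => ⟨v, hv⟩)
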